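/- The class of finite directed graphs whose edge relation is a strict linear order satisfies all three of the following: (a) it is definable by a single first-order sentence over the signature with one binary relation symbol E; (b) there exists a countable family (φ_k)_{k∈ℕ} of C² sentences such that a finite directed graph G belongs to the class if and only if G ⊨ φ_k for every k ∈ ℕ; (c) it is not definable by any single C² sentence. -/

import Mathlib

/-- The two variables of the logic `C²`. -/
inductive C2Var : Type
  | x : C2Var
  | y : C2Var
deriving DecidableEq

/-- Formulas of `C²`, the two-variable fragment of first-order logic with counting, over
the signature with one binary relation symbol `E` and unary predicates `P₁,…,P_d`.
`exN k v φ` is the counting quantifier `∃_k v. φ` ("at least `k` elements"). -/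
inductive C2 (d : ℕ) : Type
  | eq : C2Var → C2Var → C2 d
  | edge : C2Var → C2Var → C2 d
  | pred : Fin d → C2Var → C2 d
  | not : C2 d → C2 d
  | and : C2 d → C2 d → C2 d
  | or : C2 d → C2 d → C2 d
  | exN : ℕ → C2Var → C2 d → C2 d

/-- Satisfaction of a `C²` formula in a finite directed labelled graph `(V, E, lab)`
under an assignment `a` of the two variables. -/
def C2.sat {d : ℕ} {V : Type} [Fintype V] (E : V → V → Prop) (lab : V → Fin d → Bool) :
    C2 d → (C2Var → V) → Prop
  | .eq s t, a => a s = a t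
  | .edge s t, a => E (a s) (a t)
  | .pred i s, a => lab (a s) i = true
  | .not φ, a => ¬ C2.sat E lab φ a
  | .and φ ψ, a => C2.sat E lab φ a ∧ C2.sat E lab ψ a
  | .or φ ψ, a => C2.sat E lab φ a ∨ C2.sat E lab ψ a
  | .exN k w φ, a => k ≤ Nat.card {u : V | C2.sat E lab φ (Function.update a w u)}

/-- Quantifier nesting depth of a `C²` formula. -/
def C2.depth {d : ℕ} : C2 d → ℕ
  | .eq _ _ => 0
  | .edge _ _ => 0
  | .pred _ _ => 0
  | .not φ => φ.depth
  | .and φ ψ => max φ.depth ψ.depth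
  | .or φ ψ => max φ.depth ψ.depth
  | .exN _ _ φ => φ.depth + 1

/-- Counting rank of a `C²` formula: the maximal `k` occurring in a counting
quantifier `∃_k`. -/
def C2.rank {d : ℕ} : C2 d → ℕ
  | .eq _ _ => 0
  | .edge _ _ => 0
  | .pred _ _ => 0
  | .not φ => φ.rank
  | .and φ ψ => max φ.rank ψ.rank
  | .or φ ψ => max φ.rank ψ.rank
  | .exN k _ φ => max k φ.rank

/-- Free variables of a `C²` formula. -/
def C2.freeVars {d : ℕ} : C2 d → Finset C2Var
  | .eq s t => {s, t}
  | .edge s t => {s, t}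
  | .pred _ s => {s}
  | .not φ => φ.freeVars
  | .and φ ψ => φ.freeVars ∪ ψ.freeVars
  | .or φ ψ => φ.freeVars ∪ ψ.freeVars
  | .exN _ w φ => φ.freeVars.erase w

/-- A strict linear order on a type `V`: an irreflexive, transitive and total
binary relation. -/
def IsStrictLinearOrderRel {V : Type} (E : V → V → Prop) : Prop :=
  (∀ v, ¬ E v v) ∧ (∀ u v w, E u v → E v w → E u w) ∧ (∀ u v : V, u ≠ v → E u v ∨ E v u)

open FirstOrder

/-- A directed graph `(V, E)` as a structure for the first-order language with one binary
relation symbol. -/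
def dirStructure {V : Type} (E : V → V → Prop) : Language.graph.Structure V where
  RelMap | .adj => fun x => E (x 0) (x 1)

/-- The empty labelling (dimension 0). -/
def noLab {V : Type} : V → Fin 0 → Bool := fun _ i => i.elim0

/-! Part (b) -/

noncomputable def indeg {V : Type} (E : V → V → Prop) (v : V) : ℕ := Nat.card {u : V | E u v}

lemma indeg_key {V : Type} [Fintype V] (E : V → V → Prop) (irr : ∀ v, ¬ E v v)
    (tot : ∀ u v : V, u ≠ v → E u v ∨ E v u) (inj : Function.Injective (indeg E)) :
    ∀ k v, indeg E v = k → ∀ u, E u v → indeg E u < k := by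
  classical
  have hlt : ∀ v, indeg E v < Fintype.card V := by
    intro v
    unfold indeg
    rw [Nat.card_coe_set_eq, ← Nat.card_eq_fintype_card, ← Set.ncard_univ]
    apply Set.ncard_lt_ncard _ (Set.toFinite _)
    rw [Set.ssubset_univ_iff]
    intro h
    have : v ∈ {u : V | E u v} := by rw [h]; trivial
    exact irr v this
  have himg : Finset.univ.image (indeg E) = Finset.range (Fintype.card V) := by
    apply Finset.eq_of_subset_of_card_le
    · intro i hi
      simp only [Finset.mem_image, Finset.mem_univ, true_and] at hi
      obtain ⟨v, rfl⟩ := hi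
      simpa using hlt v
    · rw [Finset.card_image_of_injective _ inj]; simp
  have hS : ∀ k, k < Fintype.card V → {u : V | indeg E u < k}.ncard = k := by
    intro k hk
    rw [← Set.ncard_image_of_injective _ inj]
    have : indeg E '' {u : V | indeg E u < k} = (Finset.range k : Set ℕ) := by
      ext i
      simp only [Set.mem_image, Set.mem_setOf_eq, Finset.coe_range, Set.mem_Iio]
      constructor
      · rintro ⟨u, hu, rfl⟩; exact hu
      · intro hi
        have : i ∈ Finset.univ.image (indeg E) := by rw [himg]; simp; omega
        simp only [Finset.mem_image, Finset.mem_univ, true_and] at this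
        obtain ⟨u, rfl⟩ := this
        exact ⟨u, hi, rfl⟩
    rw [this, Set.ncard_coe_finset, Finset.card_range]
  intro k
  induction k using Nat.strong_induction_on with
  | _ k ih =>
    intro v hv u hu
    have hsub : {u : V | indeg E u < k} ⊆ {u : V | E u v} := by
      intro w hw
      have hne : w ≠ v := by rintro rfl; simp [hv] at hw
      rcases tot w v hne with h | h
      · exact h
      · have := ih _ hw w rfl v h
        simp only [Set.mem_setOf_eq] at hw
        omega
    have heq := Set.eq_of_subset_of_ncard_le hsub (by
      rw [hS k (hv ▸ hlt v), ← Nat.card_coe_set_eq]; exact hv.le) (Set.toFinite _)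
    have : u ∈ {u : V | E u v} := hu
    rw [← heq] at this
    exact this

lemma linear_of_indeg {V : Type} [Fintype V] (E : V → V → Prop) (irr : ∀ v, ¬ E v v)
    (tot : ∀ u v : V, u ≠ v → E u v ∨ E v u) (inj : Function.Injective (indeg E)) :
    IsStrictLinearOrderRel E := by
  have key := fun u v => indeg_key E irr tot inj _ v rfl u
  refine ⟨irr, ?_, tot⟩
  intro u v w huv hvw
  have h1 := key _ _ huv
  have h2 := key _ _ hvw
  have hne : u ≠ w := by rintro rfl; omega
  rcases tot u w hne with h | h
  · exact h
  · have := key _ _ h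
    omega

lemma indeg_of_linear {V : Type} [Fintype V] (E : V → V → Prop)
    (h : IsStrictLinearOrderRel E) : Function.Injective (indeg E) := by
  obtain ⟨irr, tr, tot⟩ := h
  have key : ∀ u v, E u v → indeg E u < indeg E v := by
    intro u v huv
    unfold indeg
    rw [Nat.card_coe_set_eq, Nat.card_coe_set_eq]
    apply Set.ncard_lt_ncard _ (Set.toFinite _)
    refine ⟨fun w hw => tr _ _ _ hw huv, fun hh => irr u (hh huv)⟩
  intro u v huv
  by_contra hne
  rcases tot u v hne with h | h
  · have := key _ _ h; omega
  · have := key _ _ h; omega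

def totF : C2 0 :=
  .not (.exN 1 .x (.exN 1 .y (.not (.or (.eq .x .y) (.or (.edge .x .y) (.edge .y .x))))))

def degF (k : ℕ) : C2 0 :=
  .not (.exN 2 .x (.and (.exN k .y (.edge .y .x)) (.not (.exN (k+1) .y (.edge .y .x)))))

lemma one_le_natCard {V : Type} [Fintype V] (p : V → Prop) :
    1 ≤ Nat.card {u : V | p u} ↔ ∃ u, p u := by
  rw [Nat.card_coe_set_eq, Nat.one_le_iff_ne_zero, ← Nat.pos_iff_ne_zero, Set.ncard_pos]
  rfl

lemma two_le_natCard {V : Type} [Fintype V] (p : V → Prop) :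
    2 ≤ Nat.card {u : V | p u} ↔ ∃ u v, p u ∧ p v ∧ u ≠ v := by
  rw [Nat.card_coe_set_eq]
  change 1 < _ ↔ _
  rw [Set.one_lt_ncard_iff]
  simp

lemma sat_totF {V : Type} [Fintype V] (E : V → V → Prop) (a : C2Var → V) :
    C2.sat E noLab totF a ↔ ∀ u v : V, u ≠ v → E u v ∨ E v u := by
  simp only [totF, C2.sat, one_le_natCard]
  simp [Function.update]
  grind

lemma sat_degF {V : Type} [Fintype V] (E : V → V → Prop) (k : ℕ) (a : C2Var → V) :
    C2.sat E noLab (degF k) a ↔ ∀ u v : V, indeg E u = k → indeg E v = k → u = v := by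
  have : ∀ u, C2.sat E noLab
      (.and (.exN k .y (.edge .y .x)) (.not (.exN (k+1) .y (.edge .y .x))) : C2 0)
      (Function.update a .x u) ↔ indeg E u = k := by
    intro u
    simp only [C2.sat]
    simp only [Function.update, indeg]
    simp only [reduceCtorEq, eq_self, dite_true, dite_false]
    omega
  change (¬ (2 ≤ _)) ↔ _
  rw [two_le_natCard]
  simp only [this]
  grind

lemma part_b : ∃ φ : ℕ → C2 0, (∀ k, (φ k).freeVars = ∅) ∧
      ∀ (V : Type) [Fintype V] (E : V → V → Prop), (∀ v, ¬ E v v) →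
        ((∀ k, ∀ a : C2Var → V, C2.sat E noLab (φ k) a) ↔ IsStrictLinearOrderRel E) := by
  refine ⟨fun k => .and totF (degF k), ?_, ?_⟩
  · intro k
    simp only [totF, degF, C2.freeVars]
    decide
  · intro V _ E irr
    have h0 : ∀ k (a : C2Var → V), C2.sat E noLab (.and totF (degF k)) a ↔
      (∀ u v : V, u ≠ v → E u v ∨ E v u) ∧
        ∀ u v : V, indeg E u = k → indeg E v = k → u = v := by
      intro k a
      rw [← sat_totF E a, ← sat_degF E k a]; rfl
    simp only [h0]
    constructor
    · intro h
      by_cases hV : Nonempty V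
      · obtain ⟨v⟩ := hV
        exact linear_of_indeg E irr (h 0 (fun _ => v)).1
          (fun u w huw => (h (indeg E w) (fun _ => v)).2 u w huw rfl)
      · exact ⟨irr, fun u => (hV ⟨u⟩).elim, fun u => (hV ⟨u⟩).elim⟩
    · intro h k a
      exact ⟨h.2.2, fun u v hu hv => indeg_of_linear E h (hu.trans hv.symm)⟩

/-! Part (a) -/

lemma part_a : ∃ σ : Language.graph.Sentence,
      ∀ (V : Type) [Fintype V] (E : V → V → Prop), (∀ v, ¬ E v v) →
        (letI := dirStructure E; (σ.Realize V ↔ IsStrictLinearOrderRel E)) := by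
  let T : Language.graph.Sentence := Language.adj.transitive
  let O : Language.graph.Sentence :=
    ∀' ∀' (((&0 : Language.graph.Term (Empty ⊕ Fin 2)) =' &1) ⊔
      (Language.adj.boundedFormula₂ (&0) (&1) ⊔ Language.adj.boundedFormula₂ (&1) (&0)))
  refine ⟨T ⊓ O, ?_⟩
  intro V _ E irr
  letI := dirStructure E
  have hE : ∀ u v : V, Language.Structure.RelMap Language.adj ![u, v] ↔ E u v := by
    intro u v; exact Iff.rfl
  have hT : T.Realize V ↔ ∀ u v w, E u v → E v w → E u w := by
    simp only [T, Language.Relations.transitive, Language.Sentence.Realize,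
      Language.Formula.Realize, Language.BoundedFormula.realize_all,
      Language.BoundedFormula.realize_imp, Language.BoundedFormula.realize_rel₂]
    exact Iff.rfl
  have hO : O.Realize V ↔ ∀ u v : V, u ≠ v → E u v ∨ E v u := by
    simp only [O, Language.Sentence.Realize,
      Language.Formula.Realize, Language.BoundedFormula.realize_all,
      Language.BoundedFormula.realize_sup, Language.BoundedFormula.realize_rel₂,
      Language.BoundedFormula.realize_bdEqual, hE]
    constructor
    · intro h u v huv
      exact (h u v).resolve_left huv
    · intro h u v
      by_cases huv : u = v
      · exact Or.inl huv
      · exact Or.inr (h u v huv)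
  have : (T ⊓ O).Realize V ↔ T.Realize V ∧ O.Realize V := by
    simp [Language.Sentence.Realize, Language.Formula.realize_inf]
  change (T ⊓ O).Realize V ↔ _
  rw [this, hT, hO]
  exact ⟨fun h => ⟨irr, h.1, h.2⟩, fun h => ⟨h.2.1, h.2.2⟩⟩

/-! Part (c) -/

/-- middle region -/
def Mid (n D i : ℕ) : Prop := D ≤ i ∧ i + D < n

/-- indistinguishability of single elements -/
def UEq (n D i j : ℕ) : Prop := i = j ∨ (Mid n D i ∧ Mid n D j)

/-- Relations that coincide with the order outside the middle. -/
structure GoodRel (n D : ℕ) (E : Fin n → Fin n → Prop) : Prop where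
  irr : ∀ v, ¬ E v v
  lt : ∀ i j : Fin n, ¬ (Mid n D i ∧ Mid n D j) → (E i j ↔ i.1 < j.1)
  tot : ∀ i j : Fin n, i ≠ j → (E i j ↔ ¬ E j i)

def PairEq {n : ℕ} (D : ℕ) (E E' : Fin n → Fin n → Prop) (a u a' u' : Fin n) : Prop :=
  UEq n D u u' ∧ (u = a ↔ u' = a') ∧ (E a u ↔ E' a' u') ∧ (E u a ↔ E' u' a')

lemma count_transfer {n DT D c k : ℕ} {E E' : Fin n → Fin n → Prop}
    (hE : GoodRel n DT E) (hE' : GoodRel n DT E') (hD : D + c ≤ DT) (hk : k ≤ c)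
    (a a' : Fin n) (ha : UEq n (D + c) a a') (S S' : Fin n → Prop)
    (hS : ∀ u u', PairEq D E E' a u a' u' → S u → S' u')
    (h : k ≤ Nat.card {u | S u}) : k ≤ Nat.card {u | S' u} := by
  classical
  rw [Nat.card_coe_set_eq] at h ⊢
  by_cases hm : Mid n (D + c) a ∧ Mid n (D + c) a'
  swap
  · have haa : a = a' := by
      rcases ha with h | h
      · exact Fin.ext h
      · exact (hm h).elim
    subst haa
    have hna : ¬ Mid n DT a := by
      intro h1
      apply hm
      unfold Mid at *
      omega
    refine h.trans (Set.ncard_le_ncard ?_ (Set.toFinite _))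
    intro u hu
    refine hS u u ⟨Or.inl rfl, Iff.rfl, ?_, ?_⟩ hu
    · rw [hE.lt _ _ (fun h => hna h.1), hE'.lt _ _ (fun h => hna h.1)]
    · rw [hE.lt _ _ (fun h => hna h.2), hE'.lt _ _ (fun h => hna h.2)]
  obtain ⟨hm1, hm2⟩ := hm
  by_cases hb : ∃ b, S b ∧ b ≠ a ∧ Mid n D b
  · obtain ⟨b, hSb, hba, hbm⟩ := hb
    have hc : ∃ s : ℕ, s + c ≤ n ∧ ∀ u : Fin n, s ≤ u.1 → u.1 < s + c → S' u := by
      by_cases hEb : E b a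
      · have hEb2 : ¬ E a b := (hE.tot b a hba).1 hEb
        refine ⟨D, by unfold Mid at *; omega, fun u h1 h2 => ?_⟩
        have hnm : ¬ Mid n DT u := by unfold Mid at *; omega
        have hlt : u.1 < a'.1 := by unfold Mid at *; omega
        have hne : u ≠ a' := by rintro rfl; omega
        refine hS b u ⟨Or.inr ⟨hbm, by unfold Mid at *; omega⟩, by simp [hba, hne], ?_, ?_⟩ hSb
        · rw [hE'.lt _ _ (fun h => hnm h.2)]
          exact ⟨fun h => (hEb2 h).elim, fun h => by omega⟩
        · rw [hE'.lt _ _ (fun h => hnm h.1)]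
          exact ⟨fun _ => hlt, fun _ => hEb⟩
      · have hEb2 : E a b := (hE.tot a b (Ne.symm hba)).2 hEb
        refine ⟨n - D - c, by unfold Mid at *; omega, fun u h1 h2 => ?_⟩
        have hnm : ¬ Mid n DT u := by unfold Mid at *; omega
        have hlt : a'.1 < u.1 := by unfold Mid at *; omega
        have hne : u ≠ a' := by rintro rfl; omega
        refine hS b u ⟨Or.inr ⟨hbm, by unfold Mid at *; omega⟩, by simp [hba, hne], ?_, ?_⟩ hSb
        · rw [hE'.lt _ _ (fun h => hnm h.2)]
          exact ⟨fun _ => hlt, fun _ => hEb2⟩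
        · rw [hE'.lt _ _ (fun h => hnm h.1)]
          exact ⟨fun h => (hEb h).elim, fun h => by omega⟩
    obtain ⟨s, hs, hall⟩ := hc
    refine hk.trans ?_
    rw [← Nat.card_coe_set_eq]
    have := Nat.card_le_card_of_injective (α := Fin c) (β := {u : Fin n | S' u})
      (fun i => ⟨⟨s + i.1, by omega⟩, hall _ (by simp) (by simp)⟩) (by
        intro i j hij
        simp only [Subtype.mk.injEq, Fin.mk.injEq] at hij
        exact Fin.ext (by omega))
    simpa using this
  · push Not at hb
    have hside : ∀ u, S u → u ≠ a → S' u ∧ u ≠ a' := by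
      intro u hu hua
      have hum := hb u hu hua
      have hnm : ¬ Mid n DT u := by unfold Mid at *; omega
      have hua' : u ≠ a' := by
        rintro rfl
        apply hum
        unfold Mid at *
        omega
      refine ⟨hS u u ⟨Or.inl rfl, by simp [hua, hua'], ?_, ?_⟩ hu, hua'⟩
      · rw [hE.lt _ _ (fun h => hnm h.2), hE'.lt _ _ (fun h => hnm h.2)]
        unfold Mid at *; omega
      · rw [hE.lt _ _ (fun h => hnm h.1), hE'.lt _ _ (fun h => hnm h.1)]
        unfold Mid at *; omega
    refine h.trans ?_
    apply Set.ncard_le_ncard_of_injOn (fun u => if u = a then a' else u) _ _ (Set.toFinite _)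
    · intro u hu
      by_cases hua : u = a
      · subst hua
        simp only [if_true]
        refine hS u a' ⟨Or.inr ⟨?_, ?_⟩, by simp, ?_, ?_⟩ hu
        · unfold Mid at *; omega
        · unfold Mid at *; omega
        · simp [hE.irr, hE'.irr]
        · simp [hE.irr, hE'.irr]
      · simp only [hua, if_false]
        exact (hside u hu hua).1
    · intro u hu v hv huv
      have h1 := hside u hu
      have h2 := hside v hv
      simp only at huv
      grind

def C2Var.other : C2Var → C2Var
  | .x => .y
  | .y => .x

/-- game position equivalence -/
def AEq {n : ℕ} (D : ℕ) (E E' : Fin n → Fin n → Prop) (α α' : C2Var → Fin n) : Prop :=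
  (∀ s, UEq n D (α s) (α' s)) ∧
    ∀ s t, (α s = α t ↔ α' s = α' t) ∧ (E (α s) (α t) ↔ E' (α' s) (α' t))

lemma UEq.mono {n D D' i j : ℕ} (h : UEq n D i j) (hD : D' ≤ D) : UEq n D' i j := by
  unfold UEq Mid at *; omega

lemma UEq.symm {n D i j : ℕ} (h : UEq n D i j) : UEq n D j i := by
  unfold UEq at *; tauto

lemma AEq.symm {n D : ℕ} {E E' : Fin n → Fin n → Prop} {α α' : C2Var → Fin n}
    (h : AEq D E E' α α') : AEq D E' E α' α :=
  ⟨fun s => (h.1 s).symm, fun s t => ⟨(h.2 s t).1.symm, (h.2 s t).2.symm⟩⟩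

lemma AEq.update {n DT D D' : ℕ} {E E' : Fin n → Fin n → Prop} (hE : GoodRel n DT E)
    (hE' : GoodRel n DT E') {α α' : C2Var → Fin n}
    (h : AEq D E E' α α') (hD : D' ≤ D) (w : C2Var) (u u' : Fin n)
    (hp : PairEq D' E E' (α w.other) u (α' w.other) u') :
    AEq D' E E' (Function.update α w u) (Function.update α' w u') := by
  obtain ⟨p1, p2, p3, p4⟩ := hp
  have h1 := (h.1 w.other).mono hD
  constructor
  · intro s
    cases w <;> cases s <;> simp_all [Function.update, C2Var.other]
  · intro s t
    cases w <;> cases s <;> cases t <;>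
      simp_all [Function.update, C2Var.other, hE.irr, hE'.irr, eq_comm]

lemma game {n DT c : ℕ} (φ : C2 0) (hr : φ.rank ≤ c) :
    ∀ (t : ℕ) (E E' : Fin n → Fin n → Prop), φ.depth ≤ t → t * c ≤ DT →
    GoodRel n DT E → GoodRel n DT E' →
    ∀ α α' : C2Var → Fin n, AEq (t * c) E E' α α' →
      C2.sat E noLab φ α → C2.sat E' noLab φ α' := by
  induction φ with
  | eq s t' => intro t E E' _ _ hE hE' α α' h; exact (h.2 s t').1.1
  | edge s t' => intro t E E' _ _ hE hE' α α' h; exact (h.2 s t').2.1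
  | pred i => exact i.elim0
  | not φ ih =>
    intro t E E' hd hDT hE hE' α α' h hs hs'
    exact hs (ih hr t E' E hd hDT hE' hE α' α h.symm hs')
  | and φ ψ ih1 ih2 =>
    intro t E E' hd hDT hE hE' α α' h hs
    simp only [C2.rank, C2.depth, max_le_iff] at hr hd
    exact ⟨ih1 hr.1 t E E' hd.1 hDT hE hE' α α' h hs.1,
      ih2 hr.2 t E E' hd.2 hDT hE hE' α α' h hs.2⟩
  | or φ ψ ih1 ih2 =>
    intro t E E' hd hDT hE hE' α α' h hs
    simp only [C2.rank, C2.depth, max_le_iff] at hr hd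
    exact hs.imp (ih1 hr.1 t E E' hd.1 hDT hE hE' α α' h)
      (ih2 hr.2 t E E' hd.2 hDT hE hE' α α' h)
  | exN k w φ ih =>
    intro t E E' hd hDT hE hE' α α' h hs
    simp only [C2.rank, C2.depth, max_le_iff] at hr hd
    obtain ⟨t, rfl⟩ : ∃ t', t = t' + 1 := ⟨t - 1, by omega⟩
    rw [Nat.succ_mul] at hDT h
    refine count_transfer hE hE' hDT hr.1 (α w.other) (α' w.other) (h.1 _) _ _ ?_ hs
    intro u u' hp
    exact ih hr.2 t E E' (by omega) (by omega) hE hE' _ _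
      (h.update hE hE' (by omega) w u u' hp)

lemma part_c : ¬ (∃ φ : C2 0, φ.freeVars = ∅ ∧
      ∀ (V : Type) [Fintype V] (E : V → V → Prop), (∀ v, ¬ E v v) →
        ((∀ a : C2Var → V, C2.sat E noLab φ a) ↔ IsStrictLinearOrderRel E)) := by
  rintro ⟨φ, -, hφ⟩
  obtain ⟨D, hD⟩ : ∃ D, D = φ.depth * φ.rank := ⟨_, rfl⟩
  let n := 2 * D + 3
  let E : Fin n → Fin n → Prop := fun i j => i.1 < j.1
  let E' : Fin n → Fin n → Prop := fun i j =>
    (i.1 < j.1 ∧ ¬ (i.1 = D ∧ j.1 = D + 2)) ∨ (i.1 = D + 2 ∧ j.1 = D)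
  have hE : GoodRel n D E := by
    constructor
    · intro v; simp [E]
    · intro i j _; rfl
    · intro i j hij
      have : i.1 ≠ j.1 := fun h => hij (Fin.ext h)
      simp only [E]; omega
  have hE' : GoodRel n D E' := by
    constructor
    · intro v; simp only [E']; omega
    · intro i j h
      simp only [E']
      unfold Mid at h
      omega
    · intro i j hij
      have : i.1 ≠ j.1 := fun h => hij (Fin.ext h)
      simp only [E']; omega
  have hL : IsStrictLinearOrderRel E := by
    refine ⟨hE.irr, fun u v w h1 h2 => ?_, fun u v huv => ?_⟩
    · simp only [E] at *; omega
    · have : u.1 ≠ v.1 := fun h => huv (Fin.ext h)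
      simp only [E]; omega
  have hL' : ¬ IsStrictLinearOrderRel E' := by
    rintro ⟨-, htr, -⟩
    have := htr ⟨D, by omega⟩ ⟨D + 1, by omega⟩ ⟨D + 2, by omega⟩
    simp [E'] at this
  have hsat := (hφ _ E hE.irr).2 hL
  apply hL'
  refine (hφ _ E' hE'.irr).1 fun α' => ?_
  by_cases hc : ((α' .x).1 = D ∧ (α' .y).1 = D + 2) ∨ ((α' .x).1 = D + 2 ∧ (α' .y).1 = D)
  · refine game φ le_rfl φ.depth E E' le_rfl hD.ge hE hE' (fun s => α' s.other) α' ?_ (hsat _)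
    rw [← hD]
    refine ⟨fun s => ?_, fun s t => ⟨?_, ?_⟩⟩
    · cases s <;> simp only [C2Var.other, UEq, Mid, n] <;> omega
    · cases s <;> cases t <;> simp only [C2Var.other, Fin.ext_iff] <;> omega
    · cases s <;> cases t <;> simp only [C2Var.other, E, E'] <;> omega
  · refine game φ le_rfl φ.depth E E' le_rfl hD.ge hE hE' α' α' ?_ (hsat _)
    refine ⟨fun s => Or.inl rfl, fun s t => ⟨Iff.rfl, ?_⟩⟩
    cases s <;> cases t <;> simp only [E, E'] <;> omega

/-- the class of finite directed graphs whose edge relation is a strict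
linear order (a) is definable by a single first-order sentence in the language of one
binary relation, (b) is definable by a countable family of `C²` sentences, and (c) is not
definable by a single `C²` sentence. -/
theorem stmt16 :
    (∃ σ : Language.graph.Sentence,
      ∀ (V : Type) [Fintype V] (E : V → V → Prop), (∀ v, ¬ E v v) →
        (letI := dirStructure E; (σ.Realize V ↔ IsStrictLinearOrderRel E))) ∧
    (∃ φ : ℕ → C2 0, (∀ k, (φ k).freeVars = ∅) ∧
      ∀ (V : Type) [Fintype V] (E : V → V → Prop), (∀ v, ¬ E v v) →
        ((∀ k, ∀ a : C2Var → V, C2.sat E noLab (φ k) a) ↔ IsStrictLinearOrderRel E)) ∧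
    ¬ (∃ φ : C2 0, φ.freeVars = ∅ ∧
      ∀ (V : Type) [Fintype V] (E : V → V → Prop), (∀ v, ¬ E v v) →
        ((∀ a : C2Var → V, C2.sat E noLab φ a) ↔ IsStrictLinearOrderRel E)) := by
  exact ⟨part_a, part_b, part_c⟩
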